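/- arXiv:1804.01357 — 7 statements merged into one kernel-verified Lean document; each statement's English description precedes it below -/
import Mathlib

section
/- For all real numbers u ≥ 0 and v > 0, the strict inequality Q(u+v) < e^{−2uv} · Q(u−v) holds. -/
/-- The standard Gaussian tail function `Q(x) = ∫_x^∞ (1/√(2π)) e^{-t²/2} dt`. -/
noncomputable def Q (x : ℝ) : ℝ :=
  ∫ t in Set.Ioi x, (1 / Real.sqrt (2 * Real.pi)) * Real.exp (-t ^ 2 / 2)

/-- For all `u ≥ 0` and `v > 0`, `Q(u+v) < e^{-2uv} · Q(u-v)`. -/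
theorem stmt_0 (u v : ℝ) (hu : 0 ≤ u) (hv : 0 < v) :
    Q (u + v) < Real.exp (-(2 * u * v)) * Q (u - v) := by
  have hc : 0 < 1 / Real.sqrt (2 * Real.pi) := by positivity
  have hint : MeasureTheory.Integrable
      (fun t : ℝ => (1 / Real.sqrt (2 * Real.pi)) * Real.exp (-t ^ 2 / 2)) := by
    have h := (integrable_exp_neg_mul_sq (b := 1 / 2) (by norm_num)).const_mul
      (1 / Real.sqrt (2 * Real.pi))
    refine h.congr (Filter.Eventually.of_forall fun t => ?_)
    simp only
    congr 2
    ring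
  have hshift : Q (u + v) = ∫ t in Set.Ioi (u - v),
      (1 / Real.sqrt (2 * Real.pi)) * Real.exp (-(t + 2 * v) ^ 2 / 2) := by
    have h := (MeasureTheory.measurePreserving_add_right MeasureTheory.volume
      (2 * v)).setIntegral_preimage_emb (measurableEmbedding_addRight (2 * v))
      (fun t : ℝ => (1 / Real.sqrt (2 * Real.pi)) * Real.exp (-t ^ 2 / 2)) (Set.Ioi (u + v))
    rw [Set.preimage_add_const_Ioi, show u + v - 2 * v = u - v by ring] at h
    exact h.symm
  have hint2 := hint.comp_add_right (2 * v)
  rw [hshift, Q, ← MeasureTheory.integral_const_mul, ← sub_pos,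
    ← MeasureTheory.integral_sub (hint.const_mul _).integrableOn hint2.integrableOn]
  have hpos : ∀ t ∈ Set.Ioi (u - v), 0 < Real.exp (-(2 * u * v)) *
      ((1 / Real.sqrt (2 * Real.pi)) * Real.exp (-t ^ 2 / 2)) -
      (1 / Real.sqrt (2 * Real.pi)) * Real.exp (-(t + 2 * v) ^ 2 / 2) := by
    intro t ht
    have ht : u - v < t := ht
    rw [sub_pos, mul_left_comm, ← Real.exp_add]
    refine mul_lt_mul_of_pos_left (Real.exp_lt_exp.mpr ?_) hc
    nlinarith [mul_pos hv (sub_pos.mpr ht)]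
  rw [MeasureTheory.setIntegral_pos_iff_support_of_nonneg_ae]
  · refine lt_of_lt_of_le (b := MeasureTheory.volume (Set.Ioi (u - v))) (by simp) ?_
    exact MeasureTheory.measure_mono fun t ht => ⟨(hpos t ht).ne', ht⟩
  · filter_upwards [MeasureTheory.ae_restrict_mem measurableSet_Ioi] with t ht
    exact (hpos t ht).le
  · exact ((hint.const_mul _).sub hint2).integrableOn
end

section
/- For every real number a, the function g : (0,∞) → ℝ defined by g(d) = e^{a/2} · Q(a/d + d/2) + e^{−a/2} · Q(d/2 − a/d) is strictly decreasing on (0,∞). -/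
theorem Q_hasDerivAt (x : ℝ) :
    HasDerivAt Q (-((1 / Real.sqrt (2 * Real.pi)) * Real.exp (-x ^ 2 / 2))) x := by
  set f : ℝ → ℝ := fun t => (1 / Real.sqrt (2 * Real.pi)) * Real.exp (-t ^ 2 / 2) with hf
  have hc : Continuous f := by rw [hf]; fun_prop
  have hi : MeasureTheory.Integrable f := by
    have h := (integrable_exp_neg_mul_sq (b := 1 / 2) (by norm_num)).const_mul
      (1 / Real.sqrt (2 * Real.pi))
    convert h using 4
    ring
  have hQ : Q = fun y => (∫ t in Set.Ioi (0 : ℝ), f t) - ∫ t in (0 : ℝ)..y, f t := by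
    funext y
    have := intervalIntegral.integral_Ioi_sub_Ioi' (f := f) (μ := MeasureTheory.volume)
      (a := 0) (b := y) hi.integrableOn hi.integrableOn
    rw [← this]
    rw [sub_sub_cancel]
    rfl
  rw [hQ]
  have h := intervalIntegral.integral_hasDerivAt_right (hc.intervalIntegrable 0 x)
    hc.stronglyMeasurable.stronglyMeasurableAtFilter hc.continuousAt
  exact h.const_sub _

/-- For every real `a`, the team Bayes risk
`g(d) = e^{a/2} Q(a/d + d/2) + e^{-a/2} Q(d/2 - a/d)` is strictly decreasing on `(0, ∞)`. -/
theorem stmt_5 (a : ℝ) :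
    StrictAntiOn
      (fun d : ℝ =>
        Real.exp (a / 2) * Q (a / d + d / 2) + Real.exp (-(a / 2)) * Q (d / 2 - a / d))
      (Set.Ioi 0) := by
  have key : ∀ d : ℝ, 0 < d → HasDerivAt (fun d : ℝ =>
        Real.exp (a / 2) * Q (a / d + d / 2) + Real.exp (-(a / 2)) * Q (d / 2 - a / d))
      (-((1 / Real.sqrt (2 * Real.pi)) * Real.exp (-(a ^ 2 / d ^ 2 + d ^ 2 / 4) / 2))) d := by
    intro d hd
    have hd0 : d ≠ 0 := hd.ne'
    have h1 : HasDerivAt (fun d : ℝ => a / d) (-(a / d ^ 2)) d := by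
      have := (hasDerivAt_inv hd0).const_mul a
      simp only [← div_eq_mul_inv] at this
      refine this.congr_deriv ?_
      ring
    have h2 : HasDerivAt (fun d : ℝ => d / 2) (1 / 2) d := (hasDerivAt_id d).div_const 2
    have h3 := ((Q_hasDerivAt (a / d + d / 2)).comp d (h1.add h2)).const_mul (Real.exp (a / 2))
    have h4 := ((Q_hasDerivAt (d / 2 - a / d)).comp d (h2.sub h1)).const_mul (Real.exp (-(a / 2)))
    have e1 : Real.exp (a / 2) * Real.exp (-(a / d + d / 2) ^ 2 / 2)
        = Real.exp (-(a ^ 2 / d ^ 2 + d ^ 2 / 4) / 2) := by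
      rw [← Real.exp_add]
      congr 1
      field_simp
      ring
    have e2 : Real.exp (-(a / 2)) * Real.exp (-(d / 2 - a / d) ^ 2 / 2)
        = Real.exp (-(a ^ 2 / d ^ 2 + d ^ 2 / 4) / 2) := by
      rw [← Real.exp_add]
      congr 1
      field_simp
      ring
    refine (h3.add h4).congr_deriv ?_
    linear_combination (-(1 / Real.sqrt (2 * Real.pi)) * (-(a / d ^ 2) + 1 / 2)) * e1
      + (-(1 / Real.sqrt (2 * Real.pi)) * (1 / 2 - -(a / d ^ 2))) * e2
  apply strictAntiOn_of_deriv_neg (convex_Ioi 0)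
  · intro d hd
    exact (key d hd).continuousAt.continuousWithinAt
  · intro d hd
    rw [interior_Ioi] at hd
    rw [(key d hd).deriv]
    have := Real.pi_pos
    have : 0 < (1 / Real.sqrt (2 * Real.pi)) * Real.exp (-(a ^ 2 / d ^ 2 + d ^ 2 / 4) / 2) := by
      positivity
    linarith
end

section
/- For every real number a and every d > 0, e^{a/2} · Q(a/d + d/2) + e^{−a/2} · Q(d/2 − a/d) < min(e^{a/2}, e^{−a/2}). (Consequently, in the team setup with 0 < τ < ∞ the Bayes risk of the optimal detector at any positive signal separation is strictly smaller than the Bayes risk of either constant decision rule, so the team solution is always informative.) -/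
/-- The integrand. -/
noncomputable def ph (t : ℝ) : ℝ := (1 / Real.sqrt (2 * Real.pi)) * Real.exp (-t ^ 2 / 2)

lemma ph_eq (t : ℝ) : ph t = (1 / Real.sqrt (2 * Real.pi)) * Real.exp (-(1/2) * t ^ 2) := by
  unfold ph; congr 2; ring

lemma ph_int : MeasureTheory.Integrable ph := by
  have h := (integrable_exp_neg_mul_sq (b := 1/2) (by norm_num)).const_mul (1 / Real.sqrt (2 * Real.pi))
  exact h.congr (Filter.Eventually.of_forall fun t => (ph_eq t).symm)

lemma ph_total : ∫ t, ph t = 1 := by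
  simp_rw [ph_eq]
  rw [MeasureTheory.integral_const_mul, integral_gaussian]
  have : Real.pi / (1/2) = 2 * Real.pi := by ring
  rw [this]
  have : 0 < Real.sqrt (2 * Real.pi) := Real.sqrt_pos.2 (by positivity)
  field_simp

lemma Q_ph (x : ℝ) : Q x = ∫ t in Set.Ioi x, ph t := rfl

lemma Q_neg (x : ℝ) : Q (-x) + Q x = 1 := by
  have h : Q (-x) = ∫ t in Set.Iic x, ph t := by
    have := integral_comp_neg_Ioi (-x) ph
    rw [neg_neg] at this
    rw [← this, Q_ph]
    congr 1; ext t; simp [ph]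
  rw [h, Q_ph, intervalIntegral.integral_Iic_add_Ioi ph_int.integrableOn ph_int.integrableOn,
    ph_total]

lemma Q_shift (x d : ℝ) : Q (x + d) = ∫ t in Set.Ioi x, ph (t + d) := by
  rw [Q_ph]
  have := (MeasureTheory.measurePreserving_add_right MeasureTheory.volume d).setIntegral_preimage_emb
    (measurableEmbedding_addRight d) ph (Set.Ioi (x + d))
  rw [← this]
  simp

lemma key (a d : ℝ) (hd : 0 < d) :
    Real.exp a * Q (a / d + d / 2) < Q (a / d - d / 2) := by
  have e : a / d + d / 2 = (a / d - d / 2) + d := by ring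
  rw [e, Q_shift, Q_ph, ← MeasureTheory.integral_const_mul, ← sub_pos]
  have i1 : MeasureTheory.Integrable (fun t => Real.exp a * ph (t + d)) :=
    (ph_int.comp_add_right d).const_mul _
  have pos : ∀ t ∈ Set.Ioi (a / d - d / 2), 0 < ph t - Real.exp a * ph (t + d) := by
    intro t ht
    have ht' : a < (t + d / 2) * d := by
      rw [← div_lt_iff₀ hd]; have := Set.mem_Ioi.1 ht; linarith
    have : Real.exp a * ph (t + d)
        = (1 / Real.sqrt (2 * Real.pi)) * Real.exp (a + -(t + d) ^ 2 / 2) := by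
      rw [Real.exp_add, ph]; ring
    rw [sub_pos, this, ph]
    apply mul_lt_mul_of_pos_left
    · apply Real.exp_lt_exp.2; nlinarith
    · have : 0 < Real.sqrt (2 * Real.pi) := Real.sqrt_pos.2 (by positivity)
      positivity
  rw [← MeasureTheory.integral_sub ph_int.integrableOn i1.integrableOn,
    MeasureTheory.setIntegral_pos_iff_support_of_nonneg_ae]
  · have : Function.support (fun t => ph t - Real.exp a * ph (t + d)) ∩ Set.Ioi (a / d - d / 2)
        = Set.Ioi (a / d - d / 2) :=
      Set.inter_eq_right.2 fun t ht => (pos t ht).ne'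
    rw [this]; simp
  · filter_upwards [MeasureTheory.ae_restrict_mem measurableSet_Ioi] with t ht
    exact (pos t ht).le
  · exact (ph_int.sub i1).integrableOn

lemma half (a d : ℝ) (hd : 0 < d) :
    Real.exp (a / 2) * Q (a / d + d / 2) + Real.exp (-(a / 2)) * Q (d / 2 - a / d)
      < Real.exp (-(a / 2)) := by
  have k := mul_lt_mul_of_pos_left (key a d hd) (Real.exp_pos (-(a / 2)))
  rw [← mul_assoc, ← Real.exp_add] at k
  have e : -(a / 2) + a = a / 2 := by ring
  rw [e] at k
  have q := Q_neg (a / d - d / 2)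
  rw [neg_sub] at q
  have : Q (d / 2 - a / d) = 1 - Q (a / d - d / 2) := by linarith
  rw [this]; linarith

theorem stmt_6 (a d : ℝ) (hd : 0 < d) :
    Real.exp (a / 2) * Q (a / d + d / 2) + Real.exp (-(a / 2)) * Q (d / 2 - a / d)
      < min (Real.exp (a / 2)) (Real.exp (-(a / 2))) := by
  refine lt_min ?_ (half a d hd)
  have h := half (-a) d hd
  have e1 : -a / 2 = -(a / 2) := by ring
  have e2 : -a / d + d / 2 = d / 2 - a / d := by ring
  have e3 : d / 2 - -a / d = a / d + d / 2 := by ring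
  rw [e1, e2, e3, neg_neg] at h
  linarith
end

section
/- If k_0 + k_1 > 0 and a(k_0 − k_1) > 0, then, with d† = √(2a(k_0 − k_1)/(k_0 + k_1)) (which is a positive real number under these hypotheses), f is strictly increasing on (0, d†) and strictly decreasing on (d†, ∞); in particular, for every d_max > 0 the infimum of f over (0, d_max] equals min( f(d_max), inf_{0 < d ≤ min(d†, d_max)} f(d) ), and f attains no interior local minimum on (0, ∞). -/
/-- The transmitter's (normalized) Bayes risk as a function of the normalized signal
separation `d`, when the receiver applies the likelihood-ratio test with threshold
`τ = eᵃ`: `f(d) = k₀ e^{a/2} Q(a/d + d/2) + k₁ e^{-a/2} Q(d/2 - a/d)`. -/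
noncomputable def f (a k0 k1 d : ℝ) : ℝ :=
  k0 * Real.exp (a / 2) * Q (a / d + d / 2) + k1 * Real.exp (-(a / 2)) * Q (d / 2 - a / d)

noncomputable def gq (t : ℝ) : ℝ := (1 / Real.sqrt (2 * Real.pi)) * Real.exp (-t ^ 2 / 2)

lemma gq_cont : Continuous gq := by unfold gq; fun_prop

lemma gq_pos (t : ℝ) : 0 < gq t := by unfold gq; positivity

lemma gq_int : MeasureTheory.Integrable gq := by
  have h := (integrable_exp_neg_mul_sq (b := 1 / 2) (by norm_num)).const_mul
    (1 / Real.sqrt (2 * Real.pi))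
  refine h.congr (Filter.Eventually.of_forall fun t => ?_)
  simp only [gq]
  congr 2
  ring

lemma Q_eq (x : ℝ) : Q x = Q 0 - ∫ t in (0 : ℝ)..x, gq t := by
  have h := intervalIntegral.integral_interval_add_Ioi (a := 0) (b := x) (f := gq)
    gq_int.integrableOn gq_int.integrableOn
  change (∫ t in Set.Ioi x, gq t) = (∫ t in Set.Ioi 0, gq t) - _
  linarith

lemma Q_deriv (x : ℝ) : HasDerivAt Q (-gq x) x := by
  have h := (gq_cont.integral_hasStrictDerivAt 0 x).hasDerivAt.const_sub (Q 0)
  exact h.congr_of_eventuallyEq (Filter.Eventually.of_forall Q_eq)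

lemma Q_bd (x : ℝ) : |Q x| ≤ ∫ t, gq t := by
  have h0 : 0 ≤ Q x := MeasureTheory.integral_nonneg fun t => (gq_pos t).le
  rw [abs_of_nonneg h0]
  exact MeasureTheory.setIntegral_le_integral gq_int
    (Filter.Eventually.of_forall fun t => (gq_pos t).le)

lemma f_bdd (a k0 k1 : ℝ) (s : Set ℝ) : BddBelow (f a k0 k1 '' s) := by
  refine ⟨-(|k0 * Real.exp (a / 2)| * (∫ t, gq t) + |k1 * Real.exp (-(a / 2))| * ∫ t, gq t), ?_⟩
  rintro _ ⟨d, -, rfl⟩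
  have key : ∀ c x : ℝ, -(|c| * ∫ t, gq t) ≤ c * Q x := by
    intro c x
    have h1 : |c * Q x| ≤ |c| * ∫ t, gq t := by
      rw [abs_mul]
      exact mul_le_mul_of_nonneg_left (Q_bd x) (abs_nonneg c)
    exact (abs_le.mp h1).1
  have h1 := key (k0 * Real.exp (a / 2)) (a / d + d / 2)
  have h2 := key (k1 * Real.exp (-(a / 2))) (d / 2 - a / d)
  unfold f
  linarith

lemma f_deriv (a k0 k1 d : ℝ) (hd : 0 < d) :
    HasDerivAt (f a k0 k1)
      ((1 / Real.sqrt (2 * Real.pi)) * Real.exp (-(a ^ 2 / d ^ 2 / 2 + d ^ 2 / 8))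
        * (a * (k0 - k1) / d ^ 2 - (k0 + k1) / 2)) d := by
  have hne := hd.ne'
  have ha : HasDerivAt (fun x : ℝ => a / x) (-(a / d ^ 2)) d := by
    have := (hasDerivAt_inv hne).const_mul a
    simpa [div_eq_mul_inv] using this
  have hb : HasDerivAt (fun x : ℝ => x / 2) (1 / 2) d := (hasDerivAt_id d).div_const 2
  have h1 := ((Q_deriv (a / d + d / 2)).comp d (ha.add hb)).const_mul (k0 * Real.exp (a / 2))
  have h2 := ((Q_deriv (d / 2 - a / d)).comp d (hb.sub ha)).const_mul (k1 * Real.exp (-(a / 2)))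
  have e1 : Real.exp (a / 2) * gq (a / d + d / 2)
      = (1 / Real.sqrt (2 * Real.pi)) * Real.exp (-(a ^ 2 / d ^ 2 / 2 + d ^ 2 / 8)) := by
    unfold gq
    rw [mul_left_comm, ← Real.exp_add]
    congr 2
    field_simp
    ring
  have e2 : Real.exp (-(a / 2)) * gq (d / 2 - a / d)
      = (1 / Real.sqrt (2 * Real.pi)) * Real.exp (-(a ^ 2 / d ^ 2 / 2 + d ^ 2 / 8)) := by
    unfold gq
    rw [mul_left_comm, ← Real.exp_add]
    congr 2
    field_simp
    ring
  refine (h1.add h2).congr_deriv ?_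
  set E := (1 / Real.sqrt (2 * Real.pi)) * Real.exp (-(a ^ 2 / d ^ 2 / 2 + d ^ 2 / 8))
  calc _ = k0 * (Real.exp (a / 2) * gq (a / d + d / 2)) * (a / d ^ 2 - 1 / 2)
        - k1 * (Real.exp (-(a / 2)) * gq (d / 2 - a / d)) * (1 / 2 + a / d ^ 2) := by ring
    _ = _ := by rw [e1, e2]; ring

/-- If `k₀ + k₁ > 0` and `a(k₀ - k₁) > 0`, then with `d† = √(2a(k₀-k₁)/(k₀+k₁))`
(positive under these hypotheses), `f` is strictly increasing on `(0, d†)` and strictly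
decreasing on `(d†, ∞)`; in particular, for every `d_max > 0` the infimum of `f` over
`(0, d_max]` equals `min(f(d_max), inf_{0 < d ≤ min(d†, d_max)} f(d))`, and `f` attains
no interior local minimum on `(0, ∞)`. -/
theorem stmt_11 (a k0 k1 : ℝ) (hsum : 0 < k0 + k1) (hdiff : 0 < a * (k0 - k1)) :
    0 < Real.sqrt (2 * a * (k0 - k1) / (k0 + k1))
      ∧ StrictMonoOn (f a k0 k1) (Set.Ioo 0 (Real.sqrt (2 * a * (k0 - k1) / (k0 + k1))))
      ∧ StrictAntiOn (f a k0 k1) (Set.Ioi (Real.sqrt (2 * a * (k0 - k1) / (k0 + k1))))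
      ∧ (∀ dmax : ℝ, 0 < dmax →
          sInf (f a k0 k1 '' Set.Ioc 0 dmax)
            = min (f a k0 k1 dmax)
                (sInf (f a k0 k1 ''
                  Set.Ioc 0 (min (Real.sqrt (2 * a * (k0 - k1) / (k0 + k1))) dmax))))
      ∧ ¬ ∃ d : ℝ, 0 < d ∧ IsLocalMin (f a k0 k1) d := by
  have hp : 0 < 2 * a * (k0 - k1) / (k0 + k1) := div_pos (by linarith) hsum
  have hD : 0 < Real.sqrt (2 * a * (k0 - k1) / (k0 + k1)) := Real.sqrt_pos.mpr hp
  have hsq : Real.sqrt (2 * a * (k0 - k1) / (k0 + k1)) ^ 2 * (k0 + k1) = 2 * (a * (k0 - k1)) := by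
    rw [Real.sq_sqrt hp.le]
    field_simp
  set D := Real.sqrt (2 * a * (k0 - k1) / (k0 + k1)) with hDdef
  clear_value D
  have hcont : ∀ d, 0 < d → ContinuousAt (f a k0 k1) d :=
    fun d hd => (f_deriv a k0 k1 d hd).continuousAt
  have hmono : StrictMonoOn (f a k0 k1) (Set.Ioc 0 D) := by
    refine strictMonoOn_of_deriv_pos (convex_Ioc 0 D)
      (fun d hd => (hcont d hd.1).continuousWithinAt) ?_
    intro d hd
    rw [interior_Ioc] at hd
    obtain ⟨hd0, hd1⟩ := hd
    rw [(f_deriv a k0 k1 d hd0).deriv]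
    refine mul_pos (by positivity) ?_
    have hlt : d ^ 2 < D ^ 2 := by nlinarith
    have : d ^ 2 * (k0 + k1) < D ^ 2 * (k0 + k1) := mul_lt_mul_of_pos_right hlt hsum
    rw [sub_pos, lt_div_iff₀ (by positivity)]
    linarith
  have hanti : StrictAntiOn (f a k0 k1) (Set.Ici D) := by
    refine strictAntiOn_of_deriv_neg (convex_Ici D)
      (fun d hd => (hcont d (hD.trans_le hd)).continuousWithinAt) ?_
    intro d hd
    rw [interior_Ici] at hd
    have hd1 : D < d := hd
    have hd0 : 0 < d := hD.trans hd1
    rw [(f_deriv a k0 k1 d hd0).deriv]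
    refine mul_neg_of_pos_of_neg (by positivity) ?_
    have hlt : D ^ 2 < d ^ 2 := by nlinarith
    have : D ^ 2 * (k0 + k1) < d ^ 2 * (k0 + k1) := mul_lt_mul_of_pos_right hlt hsum
    rw [sub_neg, div_lt_iff₀ (by positivity)]
    linarith
  refine ⟨hD, hmono.mono Set.Ioo_subset_Ioc_self, hanti.mono Set.Ioi_subset_Ici_self, ?_, ?_⟩
  · intro m hm
    have hmin : 0 < min D m := lt_min hD hm
    apply le_antisymm
    · refine le_min (csInf_le (f_bdd _ _ _ _) ⟨m, ⟨hm, le_rfl⟩, rfl⟩) ?_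
      exact csInf_le_csInf (f_bdd _ _ _ _) ⟨_, _, ⟨hmin, le_rfl⟩, rfl⟩
        (Set.image_mono (Set.Ioc_subset_Ioc_right (min_le_right _ _)))
    · refine le_csInf ⟨_, _, ⟨hm, le_rfl⟩, rfl⟩ ?_
      rintro _ ⟨d, ⟨hd0, hd1⟩, rfl⟩
      rcases le_total d D with h | h
      · exact (min_le_right _ _).trans (csInf_le (f_bdd _ _ _ _) ⟨d, ⟨hd0, le_min h hd1⟩, rfl⟩)
      · exact (min_le_left _ _).trans (hanti.antitoneOn h (h.trans hd1) hd1)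
  · rintro ⟨d, hd0, hmin⟩
    rcases lt_or_ge d D with h | h
    · have h1 : ∀ᶠ x in nhdsWithin d (Set.Iio d), f a k0 k1 d ≤ f a k0 k1 x :=
        hmin.filter_mono nhdsWithin_le_nhds
      obtain ⟨x, hx, hx0, hx1⟩ := (h1.and (Ioo_mem_nhdsLT hd0)).exists
      exact absurd (hmono ⟨hx0, (hx1.trans h).le⟩ ⟨hd0, h.le⟩ hx1) (not_lt.mpr hx)
    · have h1 : ∀ᶠ x in nhdsWithin d (Set.Ioi d), f a k0 k1 d ≤ f a k0 k1 x :=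
        hmin.filter_mono nhdsWithin_le_nhds
      obtain ⟨x, hx, hx1⟩ := (h1.and self_mem_nhdsWithin).exists
      have hx1 : d < x := hx1
      exact absurd (hanti h (h.trans hx1.le) hx1) (not_lt.mpr hx)
end

section
/- Suppose σ > 0, P_0 > 0, P_1 > 0, π_0^t, π_0^r ∈ (0,1), the receiver costs satisfy C_{10}^r > C_{00}^r and C_{01}^r > C_{11}^r, and the transmitter costs satisfy C_{10}^t > C_{00}^t and C_{01}^t > C_{11}^t (i.e., ξ_0 > 0 and ξ_1 > 0). Let S_0* = −√P_0, S_1* = √P_1, τ = π_0^r(C_{10}^r − C_{00}^r)/(π_1^r(C_{01}^r − C_{11}^r)), and η* = (S_0* + S_1*)/2 + σ² ln(τ)/(S_1* − S_0*). Then the pair ((S_0*, S_1*), [η*, ∞)) is a Nash equilibrium of the binary Gaussian signaling game, and it is informative (S_0* ≠ S_1*). -/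
/-- Gaussian density with standard deviation `σ` (centered at 0). -/
noncomputable def gauss (σ y : ℝ) : ℝ :=
  (1 / (σ * Real.sqrt (2 * Real.pi))) * Real.exp (-y ^ 2 / (2 * σ ^ 2))

/-- Bayes risk of a player with prior `π₀` (and `π₁ = 1 - π₀`) and costs `Cⱼᵢ`
(cost of deciding `Hⱼ` when `Hᵢ` is true), when the signal levels are `S₀, S₁` and
the receiver decides `H₁` iff the observation lies in `Γ₁`. -/
noncomputable def bayesRisk (σ S0 S1 π0 C00 C01 C10 C11 : ℝ) (Γ1 : Set ℝ) : ℝ :=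
  π0 * (C00 * (∫ y in Γ1ᶜ, gauss σ (y - S0)) + C10 * (∫ y in Γ1, gauss σ (y - S0)))
    + (1 - π0) * (C01 * (∫ y in Γ1ᶜ, gauss σ (y - S1)) + C11 * (∫ y in Γ1, gauss σ (y - S1)))

theorem gauss_nonneg_aux (σ : ℝ) (hσ : 0 < σ) (y : ℝ) : 0 ≤ gauss σ y := by
  unfold gauss; positivity

theorem gauss_integrable_aux (σ : ℝ) (hσ : 0 < σ) :
    MeasureTheory.Integrable (fun y => gauss σ y) := by
  unfold gauss
  apply MeasureTheory.Integrable.const_mul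
  have h := integrable_exp_neg_mul_sq (b := 1 / (2 * σ ^ 2)) (by positivity)
  refine h.congr (Filter.Eventually.of_forall fun y => ?_)
  simp only
  congr 1
  ring

theorem gauss_shift_integrable_aux (σ : ℝ) (hσ : 0 < σ) (S : ℝ) :
    MeasureTheory.Integrable (fun y => gauss σ (y - S)) :=
  (gauss_integrable_aux σ hσ).comp_sub_right S

theorem bayesRisk_eq_aux (σ : ℝ) (hσ : 0 < σ) (S0 S1 π0 C00 C01 C10 C11 : ℝ) (Γ : Set ℝ)
    (hΓ : MeasurableSet Γ) :
    bayesRisk σ S0 S1 π0 C00 C01 C10 C11 Γ =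
      (π0 * C00 + (1 - π0) * C01) * (∫ y, gauss σ y)
      + (π0 * (C10 - C00)) * (∫ y in Γ, gauss σ (y - S0))
      - ((1 - π0) * (C01 - C11)) * (∫ y in Γ, gauss σ (y - S1)) := by
  have key : ∀ S : ℝ, (∫ y in Γᶜ, gauss σ (y - S))
      = (∫ y, gauss σ y) - ∫ y in Γ, gauss σ (y - S) := by
    intro S
    have h := MeasureTheory.integral_add_compl hΓ (gauss_shift_integrable_aux σ hσ S)
    have h2 := MeasureTheory.integral_sub_right_eq_self (μ := MeasureTheory.volume)
      (fun y => gauss σ y) S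
    linarith
  unfold bayesRisk
  rw [key, key]
  ring

theorem tail_eq_aux (σ η S : ℝ) :
    (∫ y in Set.Ici η, gauss σ (y - S)) = ∫ y in Set.Ici (η - S), gauss σ y := by
  rw [← MeasureTheory.integral_indicator measurableSet_Ici,
    ← MeasureTheory.integral_indicator measurableSet_Ici,
    ← MeasureTheory.integral_sub_right_eq_self (μ := MeasureTheory.volume)
      ((Set.Ici (η - S)).indicator fun y => gauss σ y) S]
  congr 1
  ext y
  simp [Set.indicator]

theorem tail_mono_aux (σ : ℝ) (hσ : 0 < σ) (η S S' : ℝ) (h : S ≤ S') :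
    (∫ y in Set.Ici η, gauss σ (y - S)) ≤ ∫ y in Set.Ici η, gauss σ (y - S') := by
  rw [tail_eq_aux, tail_eq_aux]
  apply MeasureTheory.setIntegral_mono_set (gauss_integrable_aux σ hσ).integrableOn
  · exact Filter.Eventually.of_forall fun y => gauss_nonneg_aux σ hσ y
  · exact (Set.Ici_subset_Ici.2 (by linarith)).eventuallyLE

theorem sign_aux (σ : ℝ) (hσ : 0 < σ) (S0 S1 τ η : ℝ) (hS : S0 < S1) (hτ : 0 < τ)
    (hη : η = (S0 + S1) / 2 + σ ^ 2 * Real.log τ / (S1 - S0)) (y : ℝ) :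
    (η ≤ y → τ * gauss σ (y - S0) ≤ gauss σ (y - S1)) ∧
    (y < η → gauss σ (y - S1) ≤ τ * gauss σ (y - S0)) := by
  have hd : 0 < S1 - S0 := sub_pos.2 hS
  have e : (Real.log τ + -(y - S0) ^ 2 / (2 * σ ^ 2)) - (-(y - S1) ^ 2 / (2 * σ ^ 2))
      = (η - y) * ((S1 - S0) / σ ^ 2) := by
    rw [hη]; field_simp; ring
  have hp : 0 < (S1 - S0) / σ ^ 2 := by positivity
  have hK : 0 ≤ 1 / (σ * Real.sqrt (2 * Real.pi)) := by positivity
  have eq : τ * gauss σ (y - S0) = (1 / (σ * Real.sqrt (2 * Real.pi))) *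
      Real.exp (Real.log τ + -(y - S0) ^ 2 / (2 * σ ^ 2)) := by
    rw [Real.exp_add, Real.exp_log hτ]; unfold gauss; ring
  rw [eq]
  unfold gauss
  constructor
  · intro h
    apply mul_le_mul_of_nonneg_left _ hK
    apply Real.exp_le_exp.2
    nlinarith
  · intro h
    apply mul_le_mul_of_nonneg_left _ hK
    apply Real.exp_le_exp.2
    nlinarith

/-- When `ξ₀ > 0` and `ξ₁ > 0` (transmitter and receiver cost differences have the
same signs: `C₁₀ > C₀₀` and `C₀₁ > C₁₁` for both players), the pair
`((-√P₀, √P₁), [η*, ∞))` with `η* = (S₀*+S₁*)/2 + σ² ln τ/(S₁*-S₀*)`,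
`τ = π₀ʳ(C₁₀ʳ-C₀₀ʳ)/(π₁ʳ(C₀₁ʳ-C₁₁ʳ))`, is an informative Nash equilibrium of the
binary Gaussian signaling game. -/
theorem stmt_14 (σ P0 P1 π0t π0r C00t C01t C10t C11t C00r C01r C10r C11r : ℝ)
    (hσ : 0 < σ) (hP0 : 0 < P0) (hP1 : 0 < P1)
    (hπt : π0t ∈ Set.Ioo (0 : ℝ) 1) (hπr : π0r ∈ Set.Ioo (0 : ℝ) 1)
    (hr10 : C10r > C00r) (hr01 : C01r > C11r)
    (ht10 : C10t > C00t) (ht01 : C01t > C11t)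
    (S0s S1s τ ηs : ℝ)
    (hS0s : S0s = -Real.sqrt P0) (hS1s : S1s = Real.sqrt P1)
    (hτ : τ = π0r * (C10r - C00r) / ((1 - π0r) * (C01r - C11r)))
    (hηs : ηs = (S0s + S1s) / 2 + σ ^ 2 * Real.log τ / (S1s - S0s)) :
    (∀ S0 S1 : ℝ, S0 ^ 2 ≤ P0 → S1 ^ 2 ≤ P1 →
        bayesRisk σ S0s S1s π0t C00t C01t C10t C11t (Set.Ici ηs)
          ≤ bayesRisk σ S0 S1 π0t C00t C01t C10t C11t (Set.Ici ηs))
      ∧ (∀ Γ1 : Set ℝ, MeasurableSet Γ1 →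
          bayesRisk σ S0s S1s π0r C00r C01r C10r C11r (Set.Ici ηs)
            ≤ bayesRisk σ S0s S1s π0r C00r C01r C10r C11r Γ1)
      ∧ S0s ≠ S1s := by
  have hs0 : 0 < Real.sqrt P0 := Real.sqrt_pos.2 hP0
  have hs1 : 0 < Real.sqrt P1 := Real.sqrt_pos.2 hP1
  have hlt : S0s < S1s := by rw [hS0s, hS1s]; linarith
  obtain ⟨ht0, ht1⟩ := hπt
  obtain ⟨hr0, hr1⟩ := hπr
  refine ⟨?_, ?_, hlt.ne⟩
  · intro S0 S1 h0 h1
    rw [bayesRisk_eq_aux σ hσ _ _ _ _ _ _ _ _ measurableSet_Ici,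
      bayesRisk_eq_aux σ hσ _ _ _ _ _ _ _ _ measurableSet_Ici]
    have a0 : S0s ≤ S0 := by rw [hS0s]; exact (abs_le.1 (Real.abs_le_sqrt h0)).1
    have a1 : S1 ≤ S1s := by rw [hS1s]; exact (abs_le.1 (Real.abs_le_sqrt h1)).2
    have m0 := mul_le_mul_of_nonneg_left (tail_mono_aux σ hσ ηs _ _ a0)
      (mul_nonneg ht0.le (sub_pos.2 ht10).le)
    have m1 := mul_le_mul_of_nonneg_left (tail_mono_aux σ hσ ηs _ _ a1)
      (mul_nonneg (sub_pos.2 ht1).le (sub_pos.2 ht01).le)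
    linarith
  · intro Γ hΓ
    rw [bayesRisk_eq_aux σ hσ _ _ _ _ _ _ _ _ measurableSet_Ici,
      bayesRisk_eq_aux σ hσ _ _ _ _ _ _ _ _ hΓ]
    have ha : 0 < π0r * (C10r - C00r) := mul_pos hr0 (sub_pos.2 hr10)
    have hb : 0 < (1 - π0r) * (C01r - C11r) := mul_pos (sub_pos.2 hr1) (sub_pos.2 hr01)
    have hτ0 : 0 < τ := by rw [hτ]; exact div_pos ha hb
    have hab : π0r * (C10r - C00r) = ((1 - π0r) * (C01r - C11r)) * τ := by
      rw [hτ, mul_div_cancel₀ _ hb.ne']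
    rw [hab]
    generalize (1 - π0r) * (C01r - C11r) = b at hb
    have i0 := gauss_shift_integrable_aux σ hσ S0s
    have i1 := gauss_shift_integrable_aux σ hσ S1s
    have ih : MeasureTheory.Integrable
        (fun y => τ * gauss σ (y - S0s) - gauss σ (y - S1s)) := (i0.const_mul τ).sub i1
    have split : ∀ A : Set ℝ, (∫ y in A, (τ * gauss σ (y - S0s) - gauss σ (y - S1s)))
        = τ * (∫ y in A, gauss σ (y - S0s)) - ∫ y in A, gauss σ (y - S1s) := by
      intro A
      rw [MeasureTheory.integral_sub (i0.const_mul τ).integrableOn i1.integrableOn,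
        MeasureTheory.integral_const_mul]
    have main : (∫ y in Set.Ici ηs, (τ * gauss σ (y - S0s) - gauss σ (y - S1s)))
        ≤ ∫ y in Γ, (τ * gauss σ (y - S0s) - gauss σ (y - S1s)) := by
      rw [← MeasureTheory.integral_indicator measurableSet_Ici,
        ← MeasureTheory.integral_indicator hΓ]
      apply MeasureTheory.integral_mono (ih.indicator measurableSet_Ici) (ih.indicator hΓ)
      intro y
      obtain ⟨g1, g2⟩ := sign_aux σ hσ S0s S1s τ ηs hlt hτ0 hηs y
      by_cases hy : ηs ≤ y <;> by_cases hg : y ∈ Γ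
      · simp [Set.indicator, hy, hg]
      · have := g1 hy
        simp [Set.indicator, hy, hg]; linarith
      · have := g2 (not_le.1 hy)
        simp [Set.indicator, hy, hg]; linarith
      · simp [Set.indicator, hy, hg]
    rw [split, split] at main
    have := mul_le_mul_of_nonneg_left main hb.le
    linarith
end

section
/- Suppose σ > 0, P_0 > 0, P_1 > 0, π_0^t, π_0^r ∈ (0,1), the receiver costs satisfy C_{10}^r > C_{00}^r and C_{01}^r > C_{11}^r, and the transmitter costs satisfy C_{10}^t < C_{00}^t and C_{01}^t < C_{11}^t (i.e., ξ_0 < 0 and ξ_1 < 0). Then the binary Gaussian signaling game has no informative Nash equilibrium: there is no Nash equilibrium ((S_0*, S_1*), Γ_1*) with S_0* ≠ S_1*. -/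
open MeasureTheory in
lemma gauss_integrable (σ : ℝ) (hσ : 0 < σ) : Integrable (gauss σ) := by
  have h := (integrable_exp_neg_mul_sq (b := 1 / (2 * σ ^ 2)) (by positivity)).const_mul
    (1 / (σ * Real.sqrt (2 * Real.pi)))
  refine h.congr (Filter.Eventually.of_forall fun y => ?_)
  simp only [gauss]
  congr 2
  ring

lemma gauss_pos (σ y : ℝ) (hσ : 0 < σ) : 0 < gauss σ y := by
  unfold gauss; positivity

open MeasureTheory in
lemma risk_eq (σ S0 S1 π0 C00 C01 C10 C11 : ℝ) (Γ : Set ℝ) (hσ : 0 < σ) (hΓ : MeasurableSet Γ) :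
    bayesRisk σ S0 S1 π0 C00 C01 C10 C11 Γ =
      (π0 * C00 + (1 - π0) * C01) * (∫ y, gauss σ y)
      + π0 * (C10 - C00) * (∫ y in Γ, gauss σ (y - S0))
      + (1 - π0) * (C11 - C01) * (∫ y in Γ, gauss σ (y - S1)) := by
  have key : ∀ S, (∫ y in Γᶜ, gauss σ (y - S)) =
      (∫ y, gauss σ y) - ∫ y in Γ, gauss σ (y - S) := by
    intro S
    have h := integral_add_compl hΓ ((gauss_integrable σ hσ).comp_sub_right S)
    have h' := integral_sub_right_eq_self (μ := volume) (gauss σ) S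
    linarith
  unfold bayesRisk
  rw [key, key]; ring

open MeasureTheory in
lemma half_strict (σ d k S S' : ℝ) (hσ : 0 < σ) (hd : d ≠ 0) (h : d * S < d * S') :
    (∫ y in {y | k < d * y}, gauss σ (y - S)) < ∫ y in {y | k < d * y}, gauss σ (y - S') := by
  have tr : ∀ S, (∫ y in {y | k < d * y}, gauss σ (y - S))
      = ∫ z in {z | k - d * S < d * z}, gauss σ z := by
    intro S
    have hm : MeasurableSet {y : ℝ | k < d * y} := measurableSet_lt (by fun_prop) (by fun_prop)
    have hm' : MeasurableSet {y : ℝ | k - d * S < d * y} :=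
      measurableSet_lt (by fun_prop) (by fun_prop)
    rw [← integral_indicator hm, ← integral_indicator hm',
      ← integral_sub_right_eq_self ({z : ℝ | k - d * S < d * z}.indicator (gauss σ)) S]
    congr 1
    ext y
    by_cases hy : k < d * y
    · have : k - d * S < d * (y - S) := by linarith
      simp [Set.indicator, hy, this]
    · have : ¬ k - d * S < d * (y - S) := by intro h; apply hy; linarith
      simp only [Set.indicator, Set.mem_ofPred_eq, hy, this, if_false]
  rw [tr, tr]
  set A := {z : ℝ | k - d * S < d * z}
  set B := {z : ℝ | k - d * S' < d * z}
  have hA : MeasurableSet A := measurableSet_lt (by fun_prop) (by fun_prop)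
  have hB : MeasurableSet B := measurableSet_lt (by fun_prop) (by fun_prop)
  have hAB : A ⊆ B := fun z hz => by
    simp only [A, B, Set.mem_ofPred_eq] at *; linarith
  have hi := gauss_integrable σ hσ
  have hdiff := setIntegral_sdiff (μ := volume) (f := gauss σ) (s := B) (t := A) hA hi.integrableOn hAB
  have hpos : 0 < ∫ z in B \ A, gauss σ z := by
    rw [setIntegral_pos_iff_support_of_nonneg_ae
      (Filter.Eventually.of_forall fun z => (gauss_pos σ z hσ).le) hi.integrableOn]
    have hs : Function.support (gauss σ) = Set.univ := by
      ext z; simp [(gauss_pos σ z hσ).ne']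
    rw [hs, Set.univ_inter]
    have ho : IsOpen ({z : ℝ | k - d * S' < d * z} ∩ {z : ℝ | d * z < k - d * S}) :=
      (isOpen_lt (by fun_prop) (by fun_prop)).inter (isOpen_lt (by fun_prop) (by fun_prop))
    refine lt_of_lt_of_le (ho.measure_pos volume ⟨(k - d * (S + S') / 2) / d, ?_⟩)
      (measure_mono (t := B \ A) ?_)
    · simp only [Set.mem_inter_iff, Set.mem_ofPred_eq]
      rw [mul_div_cancel₀ _ hd]
      constructor <;> linarith
    · rintro z ⟨h1, h2⟩
      simp only [Set.mem_ofPred_eq] at h2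
      exact ⟨h1, fun h3 => by simp only [A, Set.mem_ofPred_eq] at h3; linarith⟩
  linarith

lemma thresh (σ A B S0 S1 : ℝ) (hσ : 0 < σ) (hA : 0 < A) (hB : 0 < B) :
    ∃ k : ℝ, (∀ y, k < (S1 - S0) * y → A * gauss σ (y - S0) < B * gauss σ (y - S1)) ∧
      (∀ y, (S1 - S0) * y < k → B * gauss σ (y - S1) < A * gauss σ (y - S0)) := by
  have hc : 0 < 1 / (σ * Real.sqrt (2 * Real.pi)) := by positivity
  have e : ∀ C S y : ℝ, 0 < C → C * gauss σ (y - S) =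
      1 / (σ * Real.sqrt (2 * Real.pi)) *
        Real.exp (Real.log C + -(y - S) ^ 2 / (2 * σ ^ 2)) := by
    intro C S y hC
    rw [Real.exp_add, Real.exp_log hC, gauss]; ring
  have q : ∀ y, (Real.log B + -(y - S1) ^ 2 / (2 * σ ^ 2)) -
      (Real.log A + -(y - S0) ^ 2 / (2 * σ ^ 2)) =
      ((S1 - S0) * y - (σ ^ 2 * (Real.log A - Real.log B) + (S1 ^ 2 - S0 ^ 2) / 2)) / σ ^ 2 := by
    intro y; field_simp; ring
  refine ⟨σ ^ 2 * (Real.log A - Real.log B) + (S1 ^ 2 - S0 ^ 2) / 2, fun y hy => ?_, fun y hy => ?_⟩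
  · rw [e A _ _ hA, e B _ _ hB]
    refine mul_lt_mul_of_pos_left (Real.exp_lt_exp.2 ?_) hc
    have := q y
    have h2 := div_pos (sub_pos.2 hy) (by positivity : 0 < σ ^ 2)
    linarith
  · rw [e A _ _ hA, e B _ _ hB]
    refine mul_lt_mul_of_pos_left (Real.exp_lt_exp.2 ?_) hc
    have := q y
    have h2 := div_neg_of_neg_of_pos (sub_neg.2 hy) (by positivity : 0 < σ ^ 2)
    linarith

open MeasureTheory in
lemma region_ae (f : ℝ → ℝ) (hf : Integrable f) (d k : ℝ) (hd : d ≠ 0)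
    (h1 : ∀ y, k < d * y → f y < 0) (h2 : ∀ y, d * y < k → 0 < f y)
    (Γ : Set ℝ) (hΓ : MeasurableSet Γ)
    (hopt : ∫ y in Γ, f y ≤ ∫ y in {y | k < d * y}, f y) :
    Γ =ᵐ[volume] {y : ℝ | k < d * y} := by
  classical
  have hm : MeasurableSet {y : ℝ | k < d * y} := measurableSet_lt (by fun_prop) (by fun_prop)
  rw [← integral_indicator hΓ, ← integral_indicator hm] at hopt
  have i1 := hf.indicator hΓ
  have i2 := hf.indicator hm
  have hne : ∀ᵐ y : ℝ, y ≠ k / d := by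
    simp [ae_iff]
  have hnn : 0 ≤ᵐ[volume] (Γ.indicator f - {y : ℝ | k < d * y}.indicator f) := by
    filter_upwards [hne] with y hy0
    simp only [Pi.sub_apply, Pi.zero_apply, Set.indicator, Set.mem_ofPred_eq]
    rcases lt_trichotomy k (d * y) with h | h | h
    · have := h1 y h
      split_ifs <;> linarith
    · exact absurd (by rw [h]; field_simp) hy0
    · have := h2 y h
      have h' : ¬ k < d * y := by linarith
      split_ifs <;> linarith
  have hz : (∫ y, (Γ.indicator f - {y : ℝ | k < d * y}.indicator f) y) = 0 := by
    apply le_antisymm _ (integral_nonneg_of_ae hnn)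
    rw [integral_sub' i1 i2]
    linarith
  have hz' := (integral_eq_zero_iff_of_nonneg_ae hnn (i1.sub i2)).1 hz
  rw [Filter.eventuallyEq_set]
  filter_upwards [hne, hz'] with y hy0 hy
  simp only [Pi.sub_apply, Pi.zero_apply, Set.indicator, Set.mem_ofPred_eq] at hy ⊢
  rcases lt_trichotomy k (d * y) with h | h | h
  · have := h1 y h
    by_cases hg : y ∈ Γ
    · simp [hg, h]
    · simp only [hg, h, if_true, if_false] at hy
      linarith
  · exact absurd (by rw [h]; field_simp) hy0
  · have := h2 y h
    have h' : ¬ k < d * y := by linarith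
    by_cases hg : y ∈ Γ
    · simp only [hg, h', if_true, if_false] at hy
      linarith
    · simp [hg, h']

/-- When `ξ₀ < 0` and `ξ₁ < 0` (`C₁₀ᵗ < C₀₀ᵗ` and `C₀₁ᵗ < C₁₁ᵗ` while
`C₁₀ʳ > C₀₀ʳ` and `C₀₁ʳ > C₁₁ʳ`), the binary Gaussian signaling game has no
informative Nash equilibrium. -/
theorem stmt_15 (σ P0 P1 π0t π0r C00t C01t C10t C11t C00r C01r C10r C11r : ℝ)
    (hσ : 0 < σ) (hP0 : 0 < P0) (hP1 : 0 < P1)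
    (hπt : π0t ∈ Set.Ioo (0 : ℝ) 1) (hπr : π0r ∈ Set.Ioo (0 : ℝ) 1)
    (hr10 : C10r > C00r) (hr01 : C01r > C11r)
    (ht10 : C10t < C00t) (ht01 : C01t < C11t) :
    ¬ ∃ (S0s S1s : ℝ) (Γ1s : Set ℝ), MeasurableSet Γ1s
        ∧ S0s ^ 2 ≤ P0 ∧ S1s ^ 2 ≤ P1
        ∧ (∀ S0 S1 : ℝ, S0 ^ 2 ≤ P0 → S1 ^ 2 ≤ P1 →
            bayesRisk σ S0s S1s π0t C00t C01t C10t C11t Γ1s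
              ≤ bayesRisk σ S0 S1 π0t C00t C01t C10t C11t Γ1s)
        ∧ (∀ Γ1 : Set ℝ, MeasurableSet Γ1 →
            bayesRisk σ S0s S1s π0r C00r C01r C10r C11r Γ1s
              ≤ bayesRisk σ S0s S1s π0r C00r C01r C10r C11r Γ1)
        ∧ S0s ≠ S1s := by
  rintro ⟨S0, S1, Γ, hΓ, hS0, hS1, ht, hr, hne⟩
  obtain ⟨ht0, ht1⟩ := hπt
  obtain ⟨hr0, hr1⟩ := hπr
  have hd : S1 - S0 ≠ 0 := sub_ne_zero.2 hne.symm
  have hA : 0 < π0r * (C10r - C00r) := mul_pos hr0 (by linarith)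
  have hB : 0 < (1 - π0r) * (C01r - C11r) := mul_pos (by linarith) (by linarith)
  obtain ⟨k, hk1, hk2⟩ := thresh σ _ _ S0 S1 hσ hA hB
  have hm : MeasurableSet {y : ℝ | k < (S1 - S0) * y} :=
    measurableSet_lt (by fun_prop) (by fun_prop)
  have j0 := ((gauss_integrable σ hσ).comp_sub_right S0).const_mul (π0r * (C10r - C00r))
  have j1 := ((gauss_integrable σ hσ).comp_sub_right S1).const_mul ((1 - π0r) * (C01r - C11r))
  have hae := region_ae (fun y => π0r * (C10r - C00r) * gauss σ (y - S0)
      - (1 - π0r) * (C01r - C11r) * gauss σ (y - S1)) (j0.sub j1) (S1 - S0) k hd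
      (fun y hy => sub_neg.2 (hk1 y hy)) (fun y hy => sub_pos.2 (hk2 y hy)) Γ hΓ (by
    have h := hr _ hm
    rw [risk_eq _ _ _ _ _ _ _ _ _ hσ hΓ, risk_eq _ _ _ _ _ _ _ _ _ hσ hm] at h
    rw [MeasureTheory.integral_sub j0.integrableOn j1.integrableOn,
      MeasureTheory.integral_sub j0.integrableOn j1.integrableOn]
    simp only [MeasureTheory.integral_const_mul]
    linarith)
  have hG : ∀ S, (∫ y in Γ, gauss σ (y - S)) = ∫ y in {y | k < (S1 - S0) * y}, gauss σ (y - S) :=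
    fun S => MeasureTheory.setIntegral_congr_set hae
  have a0 := ht 0 S1 (by simpa using hP0.le) hS1
  have a1 := ht S0 0 hS0 (by simpa using hP1.le)
  simp only [risk_eq _ _ _ _ _ _ _ _ _ hσ hΓ, hG] at a0 a1
  have p0 : 0 < π0t * (C00t - C10t) := mul_pos ht0 (by linarith)
  have p1 : 0 < (1 - π0t) * (C11t - C01t) := mul_pos (by linarith) (by linarith)
  have b0 : 0 ≤ (S1 - S0) * S0 := by
    by_contra hc
    have := half_strict σ (S1 - S0) k S0 0 hσ hd (by linarith)
    have := mul_lt_mul_of_pos_left this p0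
    linarith
  have b1 : (S1 - S0) * S1 ≤ 0 := by
    by_contra hc
    have := half_strict σ (S1 - S0) k 0 S1 hσ hd (by linarith)
    have := mul_lt_mul_of_pos_left this p1
    linarith
  have : 0 < (S1 - S0) ^ 2 := by positivity
  nlinarith
end

section
/- Suppose σ > 0, 0 < P_0 < P_1, π_0^t, π_0^r ∈ (0,1), the receiver costs satisfy C_{10}^r > C_{00}^r and C_{01}^r > C_{11}^r, and the transmitter costs satisfy C_{10}^t > C_{00}^t and C_{01}^t < C_{11}^t (i.e., ξ_0 > 0 and ξ_1 < 0). Then the binary Gaussian signaling game has no informative Nash equilibrium: there is no Nash equilibrium ((S_0*, S_1*), Γ_1*) with S_0* ≠ S_1*. -/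
open MeasureTheory in
lemma aux_gauss_eq (σ : ℝ) (hσ : 0 < σ) (S y : ℝ) :
    gauss σ (y - S) = ProbabilityTheory.gaussianPDFReal S ⟨σ ^ 2, sq_nonneg σ⟩ y := by
  unfold gauss ProbabilityTheory.gaussianPDFReal
  have h : Real.sqrt (2 * Real.pi * σ ^ 2) = σ * Real.sqrt (2 * Real.pi) := by
    rw [Real.sqrt_mul (by positivity), Real.sqrt_sq hσ.le, mul_comm]
  change _ = (Real.sqrt (2 * Real.pi * σ ^ 2))⁻¹ * Real.exp (-(y - S) ^ 2 / (2 * σ ^ 2))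
  rw [h, one_div]

lemma aux_pos (σ : ℝ) (hσ : 0 < σ) (y : ℝ) : 0 < gauss σ y := by
  unfold gauss
  positivity

lemma aux_cont (σ S : ℝ) : Continuous (fun y => gauss σ (y - S)) := by
  unfold gauss
  fun_prop

open MeasureTheory in
lemma aux_int (σ : ℝ) (hσ : 0 < σ) (S : ℝ) : Integrable (fun y => gauss σ (y - S)) := by
  have h := ProbabilityTheory.integrable_gaussianPDFReal S ⟨σ ^ 2, sq_nonneg σ⟩
  refine h.congr (Filter.Eventually.of_forall fun y => ?_)
  exact (aux_gauss_eq σ hσ S y).symm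

open MeasureTheory in
lemma aux_one (σ : ℝ) (hσ : 0 < σ) (S : ℝ) : ∫ y, gauss σ (y - S) = 1 := by
  simp_rw [aux_gauss_eq σ hσ S]
  apply ProbabilityTheory.integral_gaussianPDFReal_eq_one
  intro h
  have := congrArg NNReal.toReal h
  have h2 : σ ^ 2 = 0 := this
  exact (pow_pos hσ 2).ne' h2

open MeasureTheory in
lemma aux_compl (σ : ℝ) (hσ : 0 < σ) (S : ℝ) (G : Set ℝ) (hG : MeasurableSet G) :
    ∫ y in Gᶜ, gauss σ (y - S) = 1 - ∫ y in G, gauss σ (y - S) := by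
  have := integral_add_compl hG (aux_int σ hσ S)
  rw [aux_one σ hσ S] at this
  linarith

lemma aux_risk (σ : ℝ) (hσ : 0 < σ) (S0 S1 p C00 C01 C10 C11 : ℝ) (G : Set ℝ)
    (hG : MeasurableSet G) :
    bayesRisk σ S0 S1 p C00 C01 C10 C11 G = p * C00 + (1 - p) * C01
      + p * (C10 - C00) * (∫ y in G, gauss σ (y - S0))
      - (1 - p) * (C01 - C11) * (∫ y in G, gauss σ (y - S1)) := by
  unfold bayesRisk
  rw [aux_compl σ hσ S0 G hG, aux_compl σ hσ S1 G hG]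
  ring

lemma aux_ratio (σ : ℝ) (hσ : 0 < σ) (S0 S1 : ℝ) (hS : S0 ≠ S1) (c : ℝ) :
    ∃ y, gauss σ (y - S1) = Real.exp c * gauss σ (y - S0) := by
  have hd : S1 - S0 ≠ 0 := sub_ne_zero.mpr hS.symm
  refine ⟨(c * (2 * σ ^ 2) + S1 ^ 2 - S0 ^ 2) / (2 * (S1 - S0)), ?_⟩
  unfold gauss
  rw [mul_left_comm (Real.exp c), ← Real.exp_add]
  congr 2
  field_simp
  ring

open MeasureTheory in
lemma aux_setpos (f : ℝ → ℝ) (hf : Continuous f) (hi : Integrable f) (s : Set ℝ)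
    (hs : MeasurableSet s) (hnn : ∀ y ∈ s, 0 ≤ f y) (hsub : ∀ y, 0 < f y → y ∈ s)
    (hex : ∃ y, 0 < f y) : 0 < ∫ y in s, f y := by
  rw [setIntegral_pos_iff_support_of_nonneg_ae _ hi.integrableOn]
  · obtain ⟨y, hy⟩ := hex
    have ho : IsOpen {y | 0 < f y} := isOpen_lt continuous_const hf
    refine lt_of_lt_of_le (ho.measure_pos volume ⟨y, hy⟩) (measure_mono ?_)
    intro z hz
    exact ⟨ne_of_gt hz, hsub z hz⟩
  · exact (ae_restrict_mem hs).mono fun y hy => hnn y hy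

open MeasureTheory in
/-- When `ξ₀ > 0`, `ξ₁ < 0` (`C₁₀ᵗ > C₀₀ᵗ`, `C₀₁ᵗ < C₁₁ᵗ` while the receiver costs
satisfy `C₁₀ʳ > C₀₀ʳ`, `C₀₁ʳ > C₁₁ʳ`) and `P₀ < P₁`, the binary Gaussian signaling
game has no informative Nash equilibrium. -/
theorem stmt_16 (σ P0 P1 π0t π0r C00t C01t C10t C11t C00r C01r C10r C11r : ℝ)
    (hσ : 0 < σ) (hP0 : 0 < P0) (hP01 : P0 < P1)
    (hπt : π0t ∈ Set.Ioo (0 : ℝ) 1) (hπr : π0r ∈ Set.Ioo (0 : ℝ) 1)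
    (hr10 : C10r > C00r) (hr01 : C01r > C11r)
    (ht10 : C10t > C00t) (ht01 : C01t < C11t) :
    ¬ ∃ (S0s S1s : ℝ) (Γ1s : Set ℝ), MeasurableSet Γ1s
        ∧ S0s ^ 2 ≤ P0 ∧ S1s ^ 2 ≤ P1
        ∧ (∀ S0 S1 : ℝ, S0 ^ 2 ≤ P0 → S1 ^ 2 ≤ P1 →
            bayesRisk σ S0s S1s π0t C00t C01t C10t C11t Γ1s
              ≤ bayesRisk σ S0 S1 π0t C00t C01t C10t C11t Γ1s)
        ∧ (∀ Γ1 : Set ℝ, MeasurableSet Γ1 →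
            bayesRisk σ S0s S1s π0r C00r C01r C10r C11r Γ1s
              ≤ bayesRisk σ S0s S1s π0r C00r C01r C10r C11r Γ1)
        ∧ S0s ≠ S1s := by
  rintro ⟨S0, S1, G, hG, h0, h1, hT, hR, hne⟩
  have hT' := hT S0 S0 h0 (h0.trans hP01.le)
  rw [aux_risk σ hσ _ _ _ _ _ _ _ _ hG, aux_risk σ hσ _ _ _ _ _ _ _ _ hG] at hT'
  have hw : 0 < (1 - π0t) * (C11t - C01t) :=
    mul_pos (by linarith [hπt.2]) (by linarith)
  have hg : ∫ y in G, gauss σ (y - S1) ≤ ∫ y in G, gauss σ (y - S0) := by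
    by_contra! hlt
    nlinarith [mul_lt_mul_of_pos_left hlt hw]
  have ha : 0 < π0r * (C10r - C00r) := mul_pos hπr.1 (by linarith)
  have hb : 0 < (1 - π0r) * (C01r - C11r) := mul_pos (by linarith [hπr.2]) (by linarith)
  have hg0 : 0 ≤ ∫ y in G, gauss σ (y - S0) :=
    integral_nonneg fun y => (aux_pos σ hσ _).le
  have hg1 : ∫ y in G, gauss σ (y - S0) ≤ 1 := by
    have h2 : 0 ≤ ∫ y in Gᶜ, gauss σ (y - S0) :=
      integral_nonneg fun y => (aux_pos σ hσ _).le
    rw [aux_compl σ hσ S0 G hG] at h2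
    linarith
  set a := π0r * (C10r - C00r) with hadef
  set b := (1 - π0r) * (C01r - C11r) with hbdef
  let f : ℝ → ℝ := fun y => b * gauss σ (y - S1) - a * gauss σ (y - S0)
  have hfc : Continuous f :=
    ((aux_cont σ S1).const_mul b).sub ((aux_cont σ S0).const_mul a)
  have hfi : Integrable f :=
    ((aux_int σ hσ S1).const_mul b).sub ((aux_int σ hσ S0).const_mul a)
  have hfint : ∀ s : Set ℝ, ∫ y in s, f y
      = b * (∫ y in s, gauss σ (y - S1)) - a * (∫ y in s, gauss σ (y - S0)) := by
    intro s
    have := integral_sub ((aux_int σ hσ S1).const_mul b).integrableOn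
      (((aux_int σ hσ S0).const_mul a).integrableOn (s := s)) (μ := volume.restrict s)
    rw [integral_const_mul, integral_const_mul] at this
    exact this
  have hD : MeasurableSet {y | 0 < f y} := (isOpen_lt continuous_const hfc).measurableSet
  have hexp : b * Real.exp (Real.log (a / b)) = a := by
    rw [Real.exp_log (by positivity)]
    field_simp
  have e1 : ∃ y, 0 < f y := by
    obtain ⟨y, hy⟩ := aux_ratio σ hσ S0 S1 hne (Real.log (a / b) + 1)
    refine ⟨y, ?_⟩
    have hp := aux_pos σ hσ (y - S0)
    have he : a < b * Real.exp (Real.log (a / b) + 1) := by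
      conv_lhs => rw [← hexp]
      exact mul_lt_mul_of_pos_left (Real.exp_lt_exp.mpr (by linarith)) hb
    show 0 < b * gauss σ (y - S1) - a * gauss σ (y - S0)
    rw [hy]
    nlinarith [mul_lt_mul_of_pos_right he hp]
  have e2 : ∃ y, 0 < - f y := by
    obtain ⟨y, hy⟩ := aux_ratio σ hσ S0 S1 hne (Real.log (a / b) - 1)
    refine ⟨y, ?_⟩
    have hp := aux_pos σ hσ (y - S0)
    have he : b * Real.exp (Real.log (a / b) - 1) < a := by
      conv_rhs => rw [← hexp]
      exact mul_lt_mul_of_pos_left (Real.exp_lt_exp.mpr (by linarith)) hb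
    show 0 < -(b * gauss σ (y - S1) - a * gauss σ (y - S0))
    rw [hy]
    nlinarith [mul_lt_mul_of_pos_right he hp]
  have i1 : 0 < ∫ y in {y | 0 < f y}, f y :=
    aux_setpos f hfc hfi _ hD (fun y hy => le_of_lt hy) (fun y hy => hy) e1
  have i2 : 0 < ∫ y in {y | 0 < f y}ᶜ, - f y := by
    refine aux_setpos (fun y => - f y) hfc.neg hfi.neg _ hD.compl (fun y hy => ?_)
      (fun y hy => ?_) e2
    · have : ¬ 0 < f y := hy
      linarith
    · show ¬ 0 < f y
      linarith
  rw [integral_neg, hfint, aux_compl σ hσ S0 _ hD, aux_compl σ hσ S1 _ hD] at i2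
  rw [hfint] at i1
  have hR' := hR _ hD
  rw [aux_risk σ hσ _ _ _ _ _ _ _ _ hG, aux_risk σ hσ _ _ _ _ _ _ _ _ hD,
    ← hadef, ← hbdef] at hR'
  have hbg := mul_le_mul_of_nonneg_left hg hb.le
  rcases le_total a b with hab | hab
  · nlinarith [mul_nonneg (sub_nonneg.mpr hab) (sub_nonneg.mpr hg1)]
  · nlinarith [mul_nonneg (sub_nonneg.mpr hab) hg0]
end
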